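/- arXiv:1812.05680 — 2 statements merged into one kernel-verified Lean document; each statement's English description precedes it below -/
import Mathlib

section
/- In a rank-one recursion B_{n+1} = B_n s^{a(n,0)} B_n ... B_n s^{a(n,q_n-1)} where the limit sequence ω = lim B_n is periodic with minimal period P not consisting only of s's, and |B_N| > |P|: if B_n s^j B_n and B_n s^{j'} B_n both appear explicitly in B_{n+1} for some n ≥ N with j ≤ j', then j = j'. (All explicit spacer gaps between consecutive B_n's are equal.) -/
/-- The two-letter alphabet `{0, s}` used in rank-one constructions. -/
inductive BVSym : Type
  | zero : BVSym
  | sp : BVSym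
  deriving DecidableEq, Inhabited

theorem bv_dvd (P : List BVSym) (hP : P ≠ []) (ω : ℕ → BVSym)
    (hω : ∀ n, ω n = P.getD (n % P.length) default)
    (hmin : ∀ Q : List BVSym, Q ≠ [] →
      (∀ n, ω n = Q.getD (n % Q.length) default) → P.length ≤ Q.length)
    (B : List BVSym) (hlen : P.length < B.length)
    (hBpre : ∀ i < B.length, ω i = B.getD i default)
    (j p : ℕ) (hp : P.length ∣ p)
    (hocc : ∀ i < (B ++ List.replicate j BVSym.sp ++ B).length,
      ω (p + i) = (B ++ List.replicate j BVSym.sp ++ B).getD i default) :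
    P.length ∣ B.length + j := by
  have hL : 0 < P.length := List.length_pos_iff.mpr hP
  have hcong : ∀ a b, a ≡ b [MOD P.length] → ω a = ω b := by
    intro a b h
    rw [hω a, hω b, h]
  have hp0 : p ≡ 0 [MOD P.length] := (Nat.modEq_zero_iff_dvd).2 hp
  have h1 : ∀ i < P.length, ω (i + (B.length + j)) = ω i := by
    intro i hi
    have h := hocc (B.length + j + i) (by simp; omega)
    rw [List.getD_append_right _ _ _ _ (by simp)] at h
    rw [show B.length + j + i - (B ++ List.replicate j BVSym.sp).length = i by simp] at h
    rw [hBpre i (by omega), ← h]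
    apply hcong
    have := (hp0.add_right (B.length + j + i)).symm
    simpa [add_comm, add_left_comm, add_assoc] using this
  set d := B.length + j
  have h2 : ∀ i, ω (i + d % P.length) = ω i := by
    intro i
    rw [hcong i (i % P.length) (Nat.mod_modEq _ _).symm, ← h1 _ (Nat.mod_lt i hL)]
    exact hcong _ _ (Nat.ModEq.add (Nat.mod_modEq _ _).symm (Nat.mod_modEq _ _))
  by_contra hnd
  have hr : 0 < d % P.length := Nat.pos_of_ne_zero fun h => hnd (Nat.dvd_of_mod_eq_zero h)
  have hlt := Nat.mod_lt d hL
  set r := d % P.length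
  have h3 := hmin ((List.range r).map ω) (by simp; omega) (by
    intro n
    have hm := Nat.mod_lt n hr
    have hper : Function.Periodic ω r := h2
    simp [List.getD_eq_getElem?_getD, hm, hper.map_mod_nat])
  simp at h3
  omega

/-- If `ω = PPP…` with minimal period block `P` beginning with `0`, `B` is a prefix
of `ω` longer than `P`, and `B s^j B`, `B s^{j'} B` both appear explicitly in `ω`
(at positions that are multiples of `|P|`), then `j = j'`. -/
theorem explicit_spacer_gaps_equal (P : List BVSym) (hP : P ≠ [])
    (hhead : P.head? = some BVSym.zero) (ω : ℕ → BVSym)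
    (hω : ∀ n, ω n = P.getD (n % P.length) default)
    (hmin : ∀ Q : List BVSym, Q ≠ [] →
      (∀ n, ω n = Q.getD (n % Q.length) default) → P.length ≤ Q.length)
    (B : List BVSym) (hlen : P.length < B.length)
    (hBpre : ∀ i < B.length, ω i = B.getD i default)
    (j j' : ℕ) (hjj' : j ≤ j') (p p' : ℕ)
    (hp : P.length ∣ p) (hp' : P.length ∣ p')
    (hocc : ∀ i < (B ++ List.replicate j BVSym.sp ++ B).length,
      ω (p + i) = (B ++ List.replicate j BVSym.sp ++ B).getD i default)
    (hocc' : ∀ i < (B ++ List.replicate j' BVSym.sp ++ B).length,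
      ω (p' + i) = (B ++ List.replicate j' BVSym.sp ++ B).getD i default) :
    j = j' := by
  have hL : 0 < P.length := List.length_pos_iff.mpr hP
  have h := bv_dvd P hP ω hω hmin B hlen hBpre j p hp hocc
  have h' := bv_dvd P hP ω hω hmin B hlen hBpre j' p' hp' hocc'
  by_contra hne
  have hd : P.length ∣ j' - j := by
    have := Nat.dvd_sub h' h
    rwa [Nat.add_sub_add_left] at this
  have hle : P.length ≤ j' - j := Nat.le_of_dvd (by omega) hd
  have h4 := hocc' (B.length + j' - P.length) (by simp; omega)
  have hz : P.length ∣ p' + (B.length + j' - P.length) :=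
    dvd_add hp' (Nat.dvd_sub h' dvd_rfl)
  rw [hω, Nat.mod_eq_zero_of_dvd hz,
    List.getD_append _ _ _ _ (by simp; omega),
    List.getD_append_right _ _ _ _ (by omega),
    List.getD_eq_getElem (List.replicate j' BVSym.sp) _ (by simp; omega), List.getElem_replicate] at h4
  cases P with
  | nil => exact hP rfl
  | cons a t =>
    simp at hhead h4
    rw [hhead] at h4
    exact absurd h4 (by decide)
end

section
/- If levels n and n+1 of a Bratteli–Vershik recursion are both semi k-periodic with the same repeating block U (U_n = U_{n+1} = U, U not beginning or ending with the spacer symbol), then the spacer counts agree: c_{n+1} = c_n. Concretely: if W = (U s^{c})^{t} U s^{l} with l ≤ c and W = (U s^{c'})^{t'} U s^{l'} with l' ≤ c', t, t' ≥ 1, and U nonempty not beginning or ending with s, then c = c' (and hence t = t', l = l'). -/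
/-- `wpow w i` is the `i`-fold concatenation of the word `w` with itself. -/
def wpow {A : Type*} (w : List A) (i : ℕ) : List A := (List.replicate i w).flatten

theorem aux_rep {A : Type*} (s : A) (X Y : List A) (hX : X.head? ≠ some s)
    (hY : Y.head? ≠ some s) : ∀ c c' : ℕ,
    List.replicate c s ++ X = List.replicate c' s ++ Y → c = c'
  | 0, 0, _ => rfl
  | 0, c' + 1, h => by
      exfalso; apply hX
      have : X = List.replicate (c' + 1) s ++ Y := by simpa using h
      rw [this]; simp [List.replicate_succ]
  | c + 1, 0, h => by
      exfalso; apply hY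
      have : Y = List.replicate (c + 1) s ++ X := by simpa using h.symm
      rw [this]; simp [List.replicate_succ]
  | c + 1, c' + 1, h => by
      have := aux_rep s X Y hX hY c c' (by simpa [List.replicate_succ] using h)
      omega

theorem aux_succ {A : Type*} (w : List A) (i : ℕ) : wpow w (i + 1) = w ++ wpow w i := by
  simp [wpow, List.replicate_succ]

theorem aux_len {A : Type*} (w : List A) (i : ℕ) : (wpow w i).length = w.length * i := by
  simp [wpow, mul_comm]

theorem aux_head {A : Type*} (s : A) (U V Z : List A) (hU : U ≠ []) (hh : U.head? ≠ some s)
    (i : ℕ) : (wpow (U ++ V) i ++ (U ++ Z)).head? ≠ some s := by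
  obtain ⟨a, u, rfl⟩ := List.exists_cons_of_ne_nil hU
  cases i with
  | zero => simpa [wpow] using hh
  | succ i => simpa [aux_succ] using hh

/-- Uniqueness of the semi-periodic decomposition: if
`W = (U s^c)^t U s^l = (U s^{c'})^{t'} U s^{l'}` with `l ≤ c`, `l' ≤ c'`,
`t, t' ≥ 1` and `U` nonempty not beginning or ending with `s`, then
`c = c'`, `t = t'` and `l = l'`. -/
theorem semi_periodic_decomposition_unique {A : Type*} (s : A) (U : List A)
    (hU : U ≠ []) (hUhead : U.head? ≠ some s) (hUlast : U.getLast? ≠ some s)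
    (c c' t t' l l' : ℕ) (ht : 1 ≤ t) (ht' : 1 ≤ t')
    (hl : l ≤ c) (hl' : l' ≤ c')
    (heq : wpow (U ++ List.replicate c s) t ++ U ++ List.replicate l s
      = wpow (U ++ List.replicate c' s) t' ++ U ++ List.replicate l' s) :
    c = c' ∧ t = t' ∧ l = l' := by
  obtain ⟨t, rfl⟩ := Nat.exists_eq_add_of_le' ht
  obtain ⟨t', rfl⟩ := Nat.exists_eq_add_of_le' ht'
  have hc : c = c' := by
    have h := heq
    simp only [aux_succ, List.append_assoc, List.append_cancel_left_eq] at h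
    exact aux_rep s _ _ (by simpa using aux_head s U _ _ hU hUhead t)
      (by simpa using aux_head s U _ _ hU hUhead t') c c' h
  subst hc
  have hp := List.length_pos_iff.2 hU
  have h := congrArg List.length heq
  simp only [List.length_append, aux_len, List.length_replicate] at h
  have h2 : l + (U.length + c) * (t + 1) = l' + (U.length + c) * (t' + 1) := by omega
  have hq := congrArg (· / (U.length + c)) h2
  simp only [Nat.add_mul_div_left _ _ (show 0 < U.length + c by omega),
    Nat.div_eq_of_lt (show l < U.length + c by omega),
    Nat.div_eq_of_lt (show l' < U.length + c by omega), zero_add] at hq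
  rw [hq] at h2
  exact ⟨rfl, hq, by omega⟩
end
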